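/- arXiv:2403.16309 — 2 statements merged into one kernel-verified Lean document; each statement's English description precedes it below -/
import Mathlib

section
/- In the augmentation ideal ℓ₀¹(ℤ/3ℤ), with γ = (1/3)exp(2πi/3) and e = γΔ₁ + γ̄Δ₂, the following hold: (i) e*e = e; (ii) ‖e‖₁ = 1; (iii) 𝟙₀ − e = γ̄Δ₁ + γΔ₂; (iv) ‖𝟙₀ − e‖₁ = 1. Here ‖·‖₁ is the ℓ¹-norm ‖a‖₁ = ∑_{g∈ℤ/3ℤ}|a(g)|. -/
/-!
Since `3γ = ω` is a primitive cube root of unity, `γ + γ̄ = -1/3`, so the value of `e` at `0` is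
`-(γ + γ̄) = 1/3` and `e = (1/3)(1, ω, ω̄)` is one third of a nontrivial character of `ℤ/3ℤ`.
One third of a character is idempotent for convolution and has `ℓ¹`-norm `1`. The complement
`𝟙₀ - e` is one third of the conjugate character, so it has norm `1` as well.
-/

noncomputable section

/-- Convolution of functions on `ℤ/3ℤ`: `(a * b) g = ∑ h, a h * b (g − h)`. -/
def conv (a b : ZMod 3 → ℂ) : ZMod 3 → ℂ :=
  fun g => ∑ h : ZMod 3, a h * b (g - h)

/-- The indicator function `δ_j`. -/
def delta (j : ZMod 3) : ZMod 3 → ℂ := fun h => if h = j then 1 else 0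

/-- `Δ₁ = δ₁ − δ₀`. -/
def D1 : ZMod 3 → ℂ := delta 1 - delta 0

/-- `Δ₂ = δ₂ − δ₀`. -/
def D2 : ZMod 3 → ℂ := delta 2 - delta 0

/-- `𝟙₀ = −(1/3)(Δ₁ + Δ₂)`, the identity of the augmentation ideal `ℓ₀¹(ℤ/3ℤ)`. -/
def one0 : ZMod 3 → ℂ := -(3 : ℂ)⁻¹ • (D1 + D2)

/-- `γ = (1/3)·exp(2πi/3)`. -/
def gam : ℂ := (1 / 3 : ℂ) * Complex.exp (2 * Real.pi * Complex.I / 3)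

/-- `e = γΔ₁ + γ̄Δ₂`, a bicontractive idempotent of `ℓ₀¹(ℤ/3ℤ)`. -/
def eIdem : ZMod 3 → ℂ := gam • D1 + (starRingEnd ℂ) gam • D2

lemma gam_eq : gam = -1 / 6 + (Real.sqrt 3 / 6 : ℝ) * Complex.I := by
  have h : (2 * Real.pi * Complex.I / 3 : ℂ)
      = ((Real.pi - Real.pi / 3 : ℝ) : ℂ) * Complex.I := by push_cast; ring
  rw [gam, h, Complex.exp_mul_I, ← Complex.ofReal_cos, ← Complex.ofReal_sin,
    Real.cos_pi_sub, Real.sin_pi_sub, Real.cos_pi_div_three, Real.sin_pi_div_three]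
  push_cast
  ring

lemma conj_gam_eq :
    (starRingEnd ℂ) gam = -1 / 6 - (Real.sqrt 3 / 6 : ℝ) * Complex.I := by
  rw [gam_eq]
  simp only [map_add, map_mul, map_div₀, map_neg, map_one, Complex.conj_ofReal, Complex.conj_I,
    map_ofNat]
  ring

lemma gam_add_conj : gam + (starRingEnd ℂ) gam = -1 / 3 := by
  rw [conj_gam_eq, gam_eq]; ring

lemma norm_gam : ‖gam‖ = 1 / 3 := by
  have h : (2 * Real.pi * Complex.I / 3 : ℂ)
      = ((2 * Real.pi / 3 : ℝ) : ℂ) * Complex.I := by push_cast; ring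
  rw [gam, h, norm_mul, Complex.norm_exp_ofReal_mul_I]
  norm_num

lemma gam_mul_conj : gam * (starRingEnd ℂ) gam = 1 / 9 := by
  rw [Complex.mul_conj', norm_gam]; norm_num

/-- The relation `ω² = ω̄` for `ω = 3γ`. -/
lemma gam_mul_gam : gam * gam = (starRingEnd ℂ) gam / 3 := by
  linear_combination gam * gam_add_conj - gam_mul_conj - (1 / 3 : ℂ) * gam_add_conj

/-- The relation `ω̄² = ω` for `ω = 3γ`. -/
lemma conj_mul_conj : (starRingEnd ℂ) gam * (starRingEnd ℂ) gam = gam / 3 := by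
  linear_combination (starRingEnd ℂ) gam * gam_add_conj - gam_mul_conj
    - (1 / 3 : ℂ) * gam_add_conj

lemma D1_zero : D1 0 = -1 := by simp [D1, delta]
lemma D1_one : D1 1 = 1 := by simp [D1, delta]
lemma D1_two : D1 2 = 0 := by
  simp [D1, delta, show (2 : ZMod 3) ≠ 1 by decide, show (2 : ZMod 3) ≠ 0 by decide]
lemma D2_zero : D2 0 = -1 := by simp [D2, delta, show (0 : ZMod 3) ≠ 2 by decide]
lemma D2_one : D2 1 = 0 := by simp [D2, delta, show (1 : ZMod 3) ≠ 2 by decide]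
lemma D2_two : D2 2 = 1 := by simp [D2, delta, show (2 : ZMod 3) ≠ 0 by decide]

lemma eIdem_zero : eIdem 0 = 1 / 3 := by
  simp only [eIdem, Pi.add_apply, Pi.smul_apply, smul_eq_mul, D1_zero, D2_zero]
  linear_combination -gam_add_conj

lemma eIdem_one : eIdem 1 = gam := by simp [eIdem, D1_one, D2_one]

lemma eIdem_two : eIdem 2 = (starRingEnd ℂ) gam := by simp [eIdem, D1_two, D2_two]

lemma sum_zmod_three {M : Type*} [AddCommMonoid M] (f : ZMod 3 → M) :
    ∑ g : ZMod 3, f g = f 0 + f 1 + f 2 :=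
  Fin.sum_univ_three f

lemma funext_zmod_three {M : Type*} {f f' : ZMod 3 → M} (h0 : f 0 = f' 0) (h1 : f 1 = f' 1)
    (h2 : f 2 = f' 2) : f = f' := by
  funext g
  have hg : g = 0 ∨ g = 1 ∨ g = 2 := by revert g; decide
  rcases hg with rfl | rfl | rfl <;> assumption

lemma conv_eIdem : conv eIdem eIdem = eIdem := by
  have s01 : (0 - 1 : ZMod 3) = 2 := by decide
  have s02 : (0 - 2 : ZMod 3) = 1 := by decide
  have s12 : (1 - 2 : ZMod 3) = 2 := by decide
  have s21 : (2 - 1 : ZMod 3) = 1 := by decide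
  apply funext_zmod_three <;>
    simp only [conv, sum_zmod_three, sub_zero, sub_self, s01, s02, s12, s21,
      eIdem_zero, eIdem_one, eIdem_two]
  · linear_combination 2 * gam_mul_conj
  · linear_combination conj_mul_conj
  · linear_combination gam_mul_gam

lemma one0_sub_eIdem : one0 - eIdem = (starRingEnd ℂ) gam • D1 + gam • D2 := by
  have h : (-(3 : ℂ)⁻¹) = gam + (starRingEnd ℂ) gam := by rw [gam_add_conj]; norm_num
  rw [one0, eIdem, h]
  module

/-- In the augmentation ideal `ℓ₀¹(ℤ/3ℤ)`, with `γ = (1/3)exp(2πi/3)` and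
`e = γΔ₁ + γ̄Δ₂`: (i) `e*e = e`; (ii) `‖e‖₁ = 1`; (iii) `𝟙₀ − e = γ̄Δ₁ + γΔ₂`;
(iv) `‖𝟙₀ − e‖₁ = 1`, where `‖a‖₁ = ∑_g |a g|`. -/
theorem eIdem_bicontractive_idempotent :
    conv eIdem eIdem = eIdem ∧
    (∑ g : ZMod 3, ‖eIdem g‖) = 1 ∧
    one0 - eIdem = (starRingEnd ℂ) gam • D1 + gam • D2 ∧
    (∑ g : ZMod 3, ‖(one0 - eIdem) g‖) = 1 := by
  have hc : ‖(starRingEnd ℂ) gam‖ = 1 / 3 := by rw [Complex.norm_conj, norm_gam]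
  refine ⟨conv_eIdem, ?_, one0_sub_eIdem, ?_⟩
  · rw [sum_zmod_three, eIdem_zero, eIdem_one, eIdem_two, hc, norm_gam]
    norm_num
  · have h0 : (starRingEnd ℂ) gam * -1 + gam * -1 = 1 / 3 := by
      linear_combination -gam_add_conj
    simp only [one0_sub_eIdem, sum_zmod_three, Pi.add_apply, Pi.smul_apply, smul_eq_mul,
      D1_zero, D1_one, D1_two, D2_zero, D2_one, D2_two, h0, mul_one, mul_zero, add_zero,
      zero_add, hc, norm_gam]
    norm_num

end
end

section
/- Let γ = (1/3)exp(2πi/3), e = γΔ₁ + γ̄Δ₂ ∈ ℓ₀¹(ℤ/3ℤ). Then for every p ∈ [1,∞), ⦀e⦀_p = 1 and ⦀𝟙₀ − e⦀_p = 1, where ⦀a⦀_p = sup{‖a*b‖_{(p)} : b ∈ ℓ₀¹(ℤ/3ℤ), ‖b‖_{(p)} ≤ 1} is the multiplier norm. -/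
/-!
Let `ω = exp(2πi/3)` and let `χ` be the character `j ↦ ω ^ j` of `ℤ/3ℤ`. Since `1 + ω + ω̄ = 0`,
`e = χ/3` and `𝟙₀ − e = χ⁻¹/3`. So it suffices to show `⦀χ/3⦀_p = 1` for every nontrivial
character `χ`.

Convolution against a character is evaluation of the Fourier transform: `b * χ = χ * b = b̂(χ) χ`,
where `b̂(χ) = ∑ h, b h * χ (-h)`. Hence `χ` is an eigenvector of `λ_p(b)` with eigenvalue `b̂(χ)`,
so that `|b̂(χ)| ≤ ‖b‖_(p)`. On the other hand `λ_p` is a combination of translation isometries, so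
`‖χ/3‖_(p) ≤ ‖χ/3‖₁ = 1`. Together, `‖(χ/3) * b‖_(p) = |b̂(χ)| ‖χ/3‖_(p) ≤ ‖b‖_(p)`. The bound is
attained at `b = χ/3`, which is idempotent, of norm one, and lies in the augmentation ideal.
-/

open scoped ENNReal

noncomputable section

/-- `λ_p(a)`: the operator of left convolution by `a` on `ℓ^p(ℤ/3ℤ)`. -/
def lam (p : ℝ≥0∞) [Fact (1 ≤ p)] (a : ZMod 3 → ℂ) :
    (PiLp p fun _ : ZMod 3 => ℂ) →L[ℂ] (PiLp p fun _ : ZMod 3 => ℂ) :=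
  LinearMap.toContinuousLinearMap
    { toFun := fun b =>
        (WithLp.equiv p (ZMod 3 → ℂ)).symm (conv a (WithLp.equiv p (ZMod 3 → ℂ) b))
      map_add' := by
        intro b c
        apply (WithLp.equiv p (ZMod 3 → ℂ)).injective
        funext g
        simp [conv, mul_add, Finset.sum_add_distrib]
      map_smul' := by
        intro c b
        apply (WithLp.equiv p (ZMod 3 → ℂ)).injective
        funext g
        simp [conv, Finset.mul_sum, mul_left_comm] }

/-- `‖a‖_{(p)} = ‖λ_p(a)‖`: the `L^p`-operator norm of `a`. -/
def opN (p : ℝ≥0∞) [Fact (1 ≤ p)] (a : ZMod 3 → ℂ) : ℝ := ‖lam p a‖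

/-- The multiplier norm `⦀a⦀_p = sup {‖a*b‖_{(p)} : b ∈ ℓ₀¹(ℤ/3ℤ), ‖b‖_{(p)} ≤ 1}` of the
multiplier algebra `M₀^p(ℤ/3ℤ)`. -/
def mnorm (p : ℝ≥0∞) [Fact (1 ≤ p)] (a : ZMod 3 → ℂ) : ℝ :=
  sSup {x : ℝ | ∃ b : ZMod 3 → ℂ,
    (∑ g : ZMod 3, b g = 0) ∧ opN p b ≤ 1 ∧ x = opN p (conv a b)}

/-- The Fourier coefficient `b̂(χ) = ∑ h, b h * χ (-h)`. -/
def fourierCoeffAt (χ : AddChar (ZMod 3) ℂ) (b : ZMod 3 → ℂ) : ℂ :=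
  ∑ h : ZMod 3, b h * χ (-h)

lemma lam_apply (p : ℝ≥0∞) [Fact (1 ≤ p)] (a : ZMod 3 → ℂ) (b : PiLp p fun _ : ZMod 3 => ℂ)
    (g : ZMod 3) : lam p a b g = ∑ h : ZMod 3, a h * b (g - h) := rfl

/-- `‖a‖_(p) ≤ ‖a‖₁`, because `λ_p(a)` is the combination of translations with coefficients `a`. -/
lemma opN_le_sum (p : ℝ≥0∞) [Fact (1 ≤ p)] (a : ZMod 3 → ℂ) :
    opN p a ≤ ∑ h : ZMod 3, ‖a h‖ := by
  refine ContinuousLinearMap.opNorm_le_bound _ (by positivity) fun b => ?_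
  have key : lam p a b = ∑ h : ZMod 3,
      a h • LinearIsometryEquiv.piLpCongrLeft p ℂ ℂ (Equiv.addRight h) b := by
    ext g
    simp [lam_apply, LinearIsometryEquiv.piLpCongrLeft_apply, sub_eq_add_neg,
      Equiv.piCongrLeft']
  rw [key, Finset.sum_mul]
  refine (norm_sum_le _ _).trans (le_of_eq (Finset.sum_congr rfl fun h _ => ?_))
  rw [norm_smul, LinearIsometryEquiv.norm_map]

lemma opN_smul (p : ℝ≥0∞) [Fact (1 ≤ p)] (c : ℂ) (a : ZMod 3 → ℂ) :
    opN p (c • a) = ‖c‖ * opN p a := by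
  have : lam p (c • a) = c • lam p a := by
    ext b g
    simp [lam_apply, Finset.mul_sum, mul_assoc]
  rw [opN, this, norm_smul, opN]

lemma conv_char_right (χ : AddChar (ZMod 3) ℂ) (b : ZMod 3 → ℂ) :
    conv b χ = fourierCoeffAt χ b • ⇑χ := by
  funext g
  simp only [conv, fourierCoeffAt, Pi.smul_apply, smul_eq_mul, Finset.sum_mul]
  refine Finset.sum_congr rfl fun h _ => ?_
  rw [sub_eq_neg_add, AddChar.map_add_eq_mul, mul_assoc]

lemma conv_comm' (a b : ZMod 3 → ℂ) : conv a b = conv b a := by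
  funext g
  refine Fintype.sum_equiv (Equiv.subLeft g) _ _ fun h => ?_
  simp [mul_comm]

/-- A character is an eigenvector of `λ_p(b)`, with eigenvalue the Fourier coefficient. -/
lemma norm_fourierCoeffAt_le (p : ℝ≥0∞) [Fact (1 ≤ p)] (χ : AddChar (ZMod 3) ℂ)
    (b : ZMod 3 → ℂ) : ‖fourierCoeffAt χ b‖ ≤ opN p b := by
  set v : PiLp p fun _ : ZMod 3 => ℂ := WithLp.toLp p ⇑χ with hv
  have hv0 : 0 < ‖v‖ := by
    rw [norm_pos_iff]
    intro h
    have : v 0 = 0 := by rw [h]; rfl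
    simp [hv] at this
  have heig : lam p b v = fourierCoeffAt χ b • v := by
    ext g
    exact congrFun (conv_char_right χ b) g
  have h := (lam p b).le_opNorm v
  rw [heig, norm_smul] at h
  exact le_of_mul_le_mul_right h hv0

lemma fourierCoeffAt_self (χ : AddChar (ZMod 3) ℂ) :
    fourierCoeffAt χ ((3 : ℂ)⁻¹ • ⇑χ) = 1 := by
  simp [fourierCoeffAt, mul_assoc, ← AddChar.map_add_eq_mul]

lemma opN_char (p : ℝ≥0∞) [Fact (1 ≤ p)] (χ : AddChar (ZMod 3) ℂ) :
    opN p ((3 : ℂ)⁻¹ • ⇑χ) = 1 := by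
  apply le_antisymm
  · refine (opN_le_sum p _).trans (le_of_eq ?_)
    simp [AddChar.norm_apply]
  · simpa [fourierCoeffAt_self] using norm_fourierCoeffAt_le p χ ((3 : ℂ)⁻¹ • ⇑χ)

lemma opN_conv_char (p : ℝ≥0∞) [Fact (1 ≤ p)] (χ : AddChar (ZMod 3) ℂ) (b : ZMod 3 → ℂ) :
    opN p (conv ((3 : ℂ)⁻¹ • ⇑χ) b) = ‖fourierCoeffAt χ b‖ := by
  have : conv ((3 : ℂ)⁻¹ • ⇑χ) b = fourierCoeffAt χ b • ((3 : ℂ)⁻¹ • ⇑χ) := by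
    rw [smul_comm, ← conv_char_right, conv_comm' b]
    funext g
    simp [conv, Finset.mul_sum, mul_assoc]
  rw [this, opN_smul, opN_char, mul_one]

lemma mnorm_char (p : ℝ≥0∞) [Fact (1 ≤ p)] (χ : AddChar (ZMod 3) ℂ) (hχ : χ ≠ 1) :
    mnorm p ((3 : ℂ)⁻¹ • ⇑χ) = 1 := by
  refine IsGreatest.csSup_eq ⟨⟨(3 : ℂ)⁻¹ • ⇑χ, ?_, (opN_char p χ).le, ?_⟩, ?_⟩
  · simp only [Pi.smul_apply, ← Finset.smul_sum, AddChar.sum_eq_zero_of_ne_one hχ, smul_zero]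
  · rw [opN_conv_char, fourierCoeffAt_self, norm_one]
  · rintro x ⟨b, -, hb, rfl⟩
    rw [opN_conv_char]
    exact (norm_fourierCoeffAt_le p χ b).trans hb

lemma stdAddChar_ne_one : (ZMod.stdAddChar : AddChar (ZMod 3) ℂ) ≠ 1 := by
  intro h
  have h1 : (ZMod.stdAddChar : AddChar (ZMod 3) ℂ) 1 =
      (ZMod.stdAddChar : AddChar (ZMod 3) ℂ) 0 := by
    rw [h]; rfl
  exact absurd (ZMod.injective_stdAddChar h1) (by decide)

lemma gam_eq_s14 : gam = (3 : ℂ)⁻¹ * (ZMod.stdAddChar : AddChar (ZMod 3) ℂ) 1 := by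
  have h := ZMod.stdAddChar_coe (N := 3) 1
  rw [Int.cast_one] at h
  rw [h, gam]
  simp

lemma conj_gam_eq_s14 :
    (starRingEnd ℂ) gam = (3 : ℂ)⁻¹ * (ZMod.stdAddChar : AddChar (ZMod 3) ℂ) 2 := by
  rw [gam_eq_s14, map_mul, ← AddChar.map_neg_eq_conj, show (-1 : ZMod 3) = 2 from rfl, map_inv₀, map_ofNat]

lemma sum_stdAddChar : 1 + (ZMod.stdAddChar : AddChar (ZMod 3) ℂ) 1
    + (ZMod.stdAddChar : AddChar (ZMod 3) ℂ) 2 = 0 := by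
  have h := AddChar.sum_eq_zero_of_ne_one stdAddChar_ne_one
  rw [show (Finset.univ : Finset (ZMod 3)) = {0, 1, 2} from rfl] at h
  rw [Finset.sum_insert (by decide), Finset.sum_insert (by decide), Finset.sum_singleton,
    AddChar.map_zero_eq_one] at h
  rw [← h]; ring

lemma eIdem_eq : eIdem = (3 : ℂ)⁻¹ • ⇑(ZMod.stdAddChar : AddChar (ZMod 3) ℂ) := by
  have hs := sum_stdAddChar
  have h12 : (1 : ZMod 3) ≠ 2 := by decide
  have h21 : (2 : ZMod 3) ≠ 1 := by decide
  have h20 : (2 : ZMod 3) ≠ 0 := by decide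
  have h02 : (0 : ZMod 3) ≠ 2 := by decide
  funext g
  simp only [eIdem, conj_gam_eq_s14]
  rw [gam_eq_s14]
  obtain rfl | rfl | rfl : g = 0 ∨ g = 1 ∨ g = 2 := by revert g; decide
  all_goals simp [D1, D2, delta, h12, h21, h20, h02]
  linear_combination (-3⁻¹ : ℂ) * hs

lemma one0_sub_eIdem_eq :
    one0 - eIdem = (3 : ℂ)⁻¹ • ⇑(ZMod.stdAddChar⁻¹ : AddChar (ZMod 3) ℂ) := by
  have hs := sum_stdAddChar
  have h12 : (1 : ZMod 3) ≠ 2 := by decide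
  have h21 : (2 : ZMod 3) ≠ 1 := by decide
  have h20 : (2 : ZMod 3) ≠ 0 := by decide
  have h02 : (0 : ZMod 3) ≠ 2 := by decide
  have n1 : (-1 : ZMod 3) = 2 := rfl
  have n2 : (-2 : ZMod 3) = 1 := rfl
  rw [eIdem_eq]
  funext g
  simp only [Pi.smul_apply, Pi.sub_apply, AddChar.inv_apply]
  obtain rfl | rfl | rfl : g = 0 ∨ g = 1 ∨ g = 2 := by revert g; decide
  · simp [one0, D1, D2, delta, h02]
    norm_num
  · rw [n1]
    simp [one0, D1, D2, delta, h12]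
    linear_combination (-3⁻¹ : ℂ) * hs
  · rw [n2]
    simp [one0, D1, D2, delta, h21, h20]
    linear_combination (-3⁻¹ : ℂ) * hs

/-- With `γ = (1/3)exp(2πi/3)` and `e = γΔ₁ + γ̄Δ₂ ∈ ℓ₀¹(ℤ/3ℤ)`, for every
`p ∈ [1,∞)` the multiplier norms satisfy `⦀e⦀_p = 1` and `⦀𝟙₀ − e⦀_p = 1`. -/
theorem mnorm_eIdem_eq_one (p : ℝ≥0∞) [Fact (1 ≤ p)] (hp : p ≠ ∞) :
    mnorm p eIdem = 1 ∧ mnorm p (one0 - eIdem) = 1 := by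
  rw [one0_sub_eIdem_eq, eIdem_eq]
  exact ⟨mnorm_char p _ stdAddChar_ne_one, mnorm_char p _ (inv_ne_one.2 stdAddChar_ne_one)⟩

end
end
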